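/- For the cyclic quiver with r = 2 vertices, the subring of ℚ(x_1,x_2) generated by all the generalized cluster variables X(l,n) (l ∈ {1,2}, n ∈ ℕ) has the set {1} ∪ {(2x_2/x_1)^m : m ≥ 1} ∪ {(2x_1/x_2)^n : n ≥ 1} as a ℤ-basis; that is, this set is ℤ-linearly independent and its ℤ-span equals that subring. (Here 2x_2/x_1 = X(1,1) = X_{E_1} and 2x_1/x_2 = X(2,1) = X_{E_2}, and the basis is the set of X_R over modules R with vanishing self-extensions.) -/

import Mathlib

/-- The ambient field `ℚ(x_1, …, x_r)`, realized as the fraction field of the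
polynomial ring over `ℚ` in variables indexed by `ZMod r` (so indices are
automatically read modulo `r`). -/
noncomputable abbrev CyclicField (r : ℕ) : Type :=
  FractionRing (MvPolynomial (ZMod r) ℚ)

/-- The variable `x_i` for `i : ℤ`, with `x_{i+r} = x_i`. -/
noncomputable def xv (r : ℕ) (i : ℤ) : CyclicField r :=
  algebraMap (MvPolynomial (ZMod r) ℚ) (CyclicField r) (MvPolynomial.X (i : ZMod r))

/-- The generalized cluster variable `X(l, n)` (the image of the indecomposable
nilpotent representation `E_l[n]` under the Caldero–Chapoton map):
`X(l,0) = 1` and, for `n ≥ 1`,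
`X(l,n) = x_{l+n}/x_l + Σ_{k=1}^{n-1} (x_{l+n}·x_{l+r-1})/(x_{l+k-1}·x_{l+k}) + x_{l+r-1}/x_{l+n-1}`. -/
noncomputable def Xgcv (r : ℕ) (l : ℤ) : ℕ → CyclicField r
  | 0 => 1
  | n + 1 =>
      xv r (l + n + 1) / xv r l
        + ∑ k ∈ Finset.Icc 1 n,
            (xv r (l + n + 1) * xv r (l + r - 1)) / (xv r (l + k - 1) * xv r (l + k))
        + xv r (l + r - 1) / xv r (l + n)

/-!
Write `a = X(1,1)` and `b = X(2,1)`, so that `a * b = 4`. In `X(l,n)` every summand with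
`1 ≤ k ≤ n - 1` equals `x_{l+n} / x_l`, because two consecutive variables always have the product
`x_1 * x_2`; hence `X(l,n)` is an integer for even `n` and an integer multiple of `X(l,1)` for odd
`n`, and the subring is `ℤ[a, b]`. A monomial `a ^ m * b ^ n` reduces, by `a * b = 4`, to a power of
`4` times a power of `a` or of `b`. Since `a` is transcendental, multiplying a linear relation
between such powers by a high power of `a` turns it into a polynomial relation for `a`.
-/

/-- The two-sided power of a pair `(a, b)`: `a ^ k` for `k ≥ 0` and `b ^ (-k)` for `k ≤ 0`, encoded
with truncated exponents. It replaces the integer power `a ^ k` when `b` is only an inverse of `a`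
up to a scalar. -/
def zpowPair {M : Type*} [Monoid M] (a b : M) (k : ℤ) : M :=
  a ^ k.toNat * b ^ (-k).toNat

theorem pow_mul_pow_eq_mul_zpowPair {M : Type*} [CommMonoid M] (a b : M) (m n : ℕ) :
    a ^ m * b ^ n = (a * b) ^ min m n * zpowPair a b (m - n) := by
  have hm : m = min m n + (m - n : ℤ).toNat := by omega
  have hn : n = min m n + (-(m - n : ℤ)).toNat := by omega
  calc a ^ m * b ^ n
      = a ^ (min m n + (m - n : ℤ).toNat) * b ^ (min m n + (-(m - n : ℤ)).toNat) := by
        rw [← hm, ← hn]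
    _ = (a * b) ^ min m n * zpowPair a b (m - n) := by
        rw [pow_add, pow_add, mul_mul_mul_comm, ← mul_pow, zpowPair]

theorem pow_mul_zpowPair {M : Type*} [CommMonoid M] (a b : M) {N : ℕ} {k : ℤ} (hk : 0 ≤ N + k) :
    a ^ N * zpowPair a b k = (a * b) ^ (-k).toNat * a ^ (N + k).toNat := by
  have hN : N + k.toNat = (-k).toNat + (N + k).toNat := by omega
  rw [zpowPair, ← mul_assoc, ← pow_add, hN, pow_add, mul_pow, mul_right_comm]

theorem span_range_zpowPair_eq_adjoin {R A : Type*} [CommSemiring R] [CommSemiring A] [Algebra R A]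
    {a b : A} {c : R} (hab : a * b = algebraMap R A c) :
    Submodule.span R (Set.range (zpowPair a b)) =
      Subalgebra.toSubmodule (Algebra.adjoin R {a, b}) := by
  apply le_antisymm
  · rw [Submodule.span_le]
    rintro _ ⟨k, rfl⟩
    have ha : a ∈ Algebra.adjoin R {a, b} := Algebra.subset_adjoin (by simp)
    have hb : b ∈ Algebra.adjoin R {a, b} := Algebra.subset_adjoin (by simp)
    exact Subalgebra.mul_mem _ (pow_mem ha _) (pow_mem hb _)
  · rw [Algebra.adjoin_eq_span, Submodule.span_le]
    intro x hx
    obtain ⟨m, n, rfl⟩ := (Submonoid.mem_closure_pair a b x).1 hx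
    rw [pow_mul_pow_eq_mul_zpowPair, hab, ← map_pow, ← Algebra.smul_def]
    exact Submodule.smul_mem _ _ (Submodule.subset_span ⟨_, rfl⟩)

/- On a fraction ring, instance search finds a `ℤ`-algebra structure that is not reducibly equal to
`Ring.toIntAlgebra`, whose module structure `Submodule.span ℤ` uses; `Subring.closure` is
independent of that choice. -/
theorem coe_adjoin_int {A : Type*} [Ring A] [Algebra ℤ A] (s : Set A) :
    (Algebra.adjoin ℤ s : Set A) = Subring.closure s := by
  apply subset_antisymm
  · intro x hx
    induction hx using Algebra.adjoin_induction with
    | mem x hx => exact Subring.subset_closure hx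
    | algebraMap n => simp
    | add x y _ _ hx hy => exact add_mem hx hy
    | mul x y _ _ hx hy => exact mul_mem hx hy
  · exact (Subring.closure_le (t := (Algebra.adjoin ℤ s).toSubring)).2 Algebra.subset_adjoin

theorem coe_span_int_range_zpowPair {A : Type*} [CommRing A] {a b : A} {c : ℤ} (hab : a * b = c) :
    (Submodule.span ℤ (Set.range (zpowPair a b)) : Set A) = Subring.closure {a, b} := by
  rw [← coe_adjoin_int]
  exact congrArg SetLike.coe (span_range_zpowPair_eq_adjoin hab)

theorem linearIndependent_smul_of_ne_zero {ι R M : Type*} [Ring R] [NoZeroDivisors R]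
    [AddCommGroup M] [Module R M] {v : ι → M} (hv : LinearIndependent R v) {r : ι → R}
    (hr : ∀ i, r i ≠ 0) : LinearIndependent R fun i ↦ r i • v i := by
  rw [linearIndependent_iff'] at hv ⊢
  intro s g hg i hi
  simp only [smul_smul] at hg
  exact (mul_eq_zero.1 (hv s _ hg i hi)).resolve_right (hr i)

theorem linearIndependent_pow_of_transcendental {R A : Type*} [CommRing R] [Ring A] [Algebra R A]
    {a : A} (ha : Transcendental R a) : LinearIndependent R fun n : ℕ ↦ a ^ n := by
  have h := (Polynomial.basisMonomials R).linearIndependent.map' (Polynomial.aeval a).toLinearMap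
    (LinearMap.ker_eq_bot.2 (transcendental_iff_injective.1 ha))
  simpa [Function.comp_def] using h

theorem linearIndependent_zpowPair {R A : Type*} [CommRing R] [NoZeroDivisors R] [CommRing A]
    [Algebra R A] {a b : A} {c : R} (ha : Transcendental R a) (hab : a * b = algebraMap R A c)
    (hc : c ≠ 0) : LinearIndependent R (zpowPair a b) := by
  rw [linearIndependent_iff_finset_linearIndependent]
  intro s
  obtain ⟨N, hN⟩ : ∃ N : ℕ, ∀ k ∈ s, 0 ≤ N + k :=
    ⟨∑ k ∈ s, k.natAbs, fun k hk ↦ by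
      have := Finset.single_le_sum (f := Int.natAbs) (fun _ _ ↦ Nat.zero_le _) hk
      omega⟩
  have hshift : Function.Injective fun k : s ↦ (N + (k : ℤ)).toNat := by
    intro i j hij
    have hi := hN i i.2
    have hj := hN j j.2
    ext
    simp only at hij
    omega
  have hpow := linearIndependent_smul_of_ne_zero
    ((linearIndependent_pow_of_transcendental ha).comp _ hshift)
    (fun k : s ↦ pow_ne_zero (-(k : ℤ)).toNat hc)
  have hmul : LinearMap.mulLeft R (a ^ N) ∘ (fun k : s ↦ zpowPair a b k) =
      fun k : s ↦ c ^ (-(k : ℤ)).toNat • a ^ (N + (k : ℤ)).toNat := by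
    funext k
    simp [pow_mul_zpowPair a b (hN k k.2), hab, Algebra.smul_def]
  exact LinearIndependent.of_comp (LinearMap.mulLeft R (a ^ N)) (hmul ▸ hpow)

theorem transcendental_div_of_algebraicIndependent {ι R K : Type*} [CommRing R] [Field K]
    [Algebra R K] {x : ι → K} (hx : AlgebraicIndependent R x) {i j : ι} (hij : i ≠ j) :
    Transcendental R (x i / x j) := by
  intro h
  let S := Algebra.adjoin R (x '' {j})
  have hxj : x j ∈ S := Algebra.subset_adjoin ⟨j, rfl, rfl⟩
  have hinj : Function.Injective (algebraMap R S) :=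
    .of_comp (f := algebraMap S K) (by
      simpa [← IsScalarTower.algebraMap_eq, ← RingHom.coe_comp] using hx.algebraMap_injective)
  have hmul : IsAlgebraic S (x i / x j * x j) :=
    (h.extendScalars hinj).mul (isAlgebraic_algebraMap (⟨x j, hxj⟩ : S))
  have := (algebraMap R K).domain_nontrivial
  rw [div_mul_cancel₀ _ (hx.ne_zero j)] at hmul
  exact hx.transcendental_adjoin (s := {j}) (by simpa using hij) hmul

theorem linearIndependent_zpowPair_div {ι R K : Type*} [CommRing R] [NoZeroDivisors R] [Field K]
    [Algebra R K] {x : ι → K} (hx : AlgebraicIndependent R x) {i j : ι} (hij : i ≠ j) {c : R}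
    (hc : c ≠ 0) :
    LinearIndependent R (zpowPair (c • (x i / x j)) (c • (x j / x i))) := by
  have := (algebraMap R K).domain_nontrivial
  have htrans : Transcendental R (c • (x i / x j)) := fun h ↦
    transcendental_div_of_algebraicIndependent hx hij
      (h.of_smul (mem_nonZeroDivisors_of_ne_zero hc))
  have hmul : c • (x i / x j) * c • (x j / x i) = algebraMap R K (c * c) := by
    rw [smul_mul_smul_comm, div_mul_div_cancel₀ (hx.ne_zero j), div_self (hx.ne_zero i),
      Algebra.algebraMap_eq_smul_one]
  exact linearIndependent_zpowPair htrans hmul (mul_ne_zero hc hc)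

theorem linearIndependent_int_zpowPair_div {ι K : Type*} [Field K] [Algebra ℚ K] {x : ι → K}
    (hx : AlgebraicIndependent ℚ x) {i j : ι} (hij : i ≠ j) {c : ℤ} (hc : c ≠ 0) :
    LinearIndependent ℤ (zpowPair (c * x i / x j) (c * x j / x i)) := by
  have hx' : AlgebraicIndependent ℤ x := hx.restrictScalars (FaithfulSMul.algebraMap_injective ℤ ℚ)
  simpa only [zsmul_eq_mul, ← mul_div_assoc] using linearIndependent_zpowPair_div hx' hij hc

section Variables

variable {r : ℕ}

theorem xv_ne_zero (i : ℤ) : xv r i ≠ 0 := by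
  rw [xv, Ne, FaithfulSMul.algebraMap_eq_zero_iff]
  exact MvPolynomial.X_ne_zero _

theorem xv_congr {i j : ℤ} (h : i ≡ j [ZMOD r]) : xv r i = xv r j := by
  rw [xv, xv, (ZMod.intCast_eq_intCast_iff i j r).2 h]

theorem algebraicIndependent_xv :
    AlgebraicIndependent ℚ fun z : ZMod r ↦
      algebraMap (MvPolynomial (ZMod r) ℚ) (CyclicField r) (MvPolynomial.X z) :=
  (MvPolynomial.algebraicIndependent_X (ZMod r) ℚ).map'
    (f := IsScalarTower.toAlgHom ℚ (MvPolynomial (ZMod r) ℚ) (CyclicField r))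
    (FaithfulSMul.algebraMap_injective _ _)

theorem linearIndependent_zpowPair_xv {i j c : ℤ} (h : ¬ i ≡ j [ZMOD r]) (hc : c ≠ 0) :
    LinearIndependent ℤ (zpowPair (c * xv r i / xv r j) (c * xv r j / xv r i)) :=
  linearIndependent_int_zpowPair_div algebraicIndependent_xv
    (mt (ZMod.intCast_eq_intCast_iff i j r).1 h) hc

end Variables

theorem xv_two_mul_xv_two (i l : ℤ) :
    xv 2 (i - 1) * xv 2 i = xv 2 l * xv 2 (l + 1) := by
  rcases Int.emod_two_eq_zero_or_one (i - l) with h | h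
  · rw [xv_congr (i := i - 1) (j := l + 1) (by grind [Int.ModEq]),
      xv_congr (i := i) (j := l) (by grind [Int.ModEq]), mul_comm]
  · rw [xv_congr (i := i - 1) (j := l) (by grind [Int.ModEq]),
      xv_congr (i := i) (j := l + 1) (by grind [Int.ModEq])]

theorem Xgcv_two_succ (l : ℤ) (n : ℕ) :
    Xgcv 2 l (n + 1) =
      (n + 1) * (xv 2 (l + n + 1) / xv 2 l) + xv 2 (l + 1) / xv 2 (l + n) := by
  have hpred : xv 2 (l + (2 : ℕ) - 1) = xv 2 (l + 1) := by congr 1; push_cast; ring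
  have hterm (k : ℕ) : (xv 2 (l + n + 1) * xv 2 (l + 1)) / (xv 2 (l + k - 1) * xv 2 (l + k)) =
      xv 2 (l + n + 1) / xv 2 l := by
    rw [xv_two_mul_xv_two (l + k) l, mul_div_mul_right _ _ (xv_ne_zero _)]
  simp only [Xgcv, hpred, hterm, Finset.sum_const, Nat.card_Icc, add_tsub_cancel_right,
    nsmul_eq_mul]
  ring

theorem Xgcv_two_one (l : ℤ) : Xgcv 2 l 1 = 2 * xv 2 (l + 1) / xv 2 l := by
  have h := Xgcv_two_succ l 0
  simp only [Nat.cast_zero, zero_add, add_zero] at h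
  rw [h]
  ring

theorem Xgcv_two_odd (l : ℤ) (m : ℕ) : Xgcv 2 l (2 * m + 1) = (m + 1 : ℕ) * Xgcv 2 l 1 := by
  rw [Xgcv_two_succ, Xgcv_two_one,
    xv_congr (i := l + (2 * m : ℕ) + 1) (j := l + 1) (by grind [Int.ModEq]),
    xv_congr (i := l + (2 * m : ℕ)) (j := l) (by grind [Int.ModEq])]
  push_cast
  ring

theorem Xgcv_two_even (l : ℤ) (m : ℕ) : Xgcv 2 l (2 * m + 2) = (2 * m + 3 : ℕ) := by
  rw [Xgcv_two_succ, xv_congr (i := l + (2 * m + 1 : ℕ) + 1) (j := l) (by grind [Int.ModEq]),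
    xv_congr (i := l + (2 * m + 1 : ℕ)) (j := l + 1) (by grind [Int.ModEq]),
    div_self (xv_ne_zero _), div_self (xv_ne_zero _)]
  push_cast
  ring

theorem Xgcv_two_mem_closure (l : ℤ) (n : ℕ) : Xgcv 2 l n ∈ Subring.closure {Xgcv 2 l 1} := by
  rcases n with _ | n
  · exact one_mem _
  obtain ⟨m, rfl | rfl⟩ := n.even_or_odd'
  · rw [Xgcv_two_odd]
    exact mul_mem (natCast_mem _ _) (Subring.mem_closure_of_mem rfl)
  · rw [Xgcv_two_even]
    exact natCast_mem _ _

theorem closure_Xgcv_two :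
    Subring.closure {x | ∃ (l : ℤ) (n : ℕ), (l = 1 ∨ l = 2) ∧ x = Xgcv 2 l n} =
      Subring.closure {Xgcv 2 1 1, Xgcv 2 2 1} := by
  apply le_antisymm
  · rw [Subring.closure_le]
    rintro _ ⟨l, n, hl, rfl⟩
    have hmem : Xgcv 2 l 1 ∈ ({Xgcv 2 1 1, Xgcv 2 2 1} : Set (CyclicField 2)) := by
      rcases hl with rfl | rfl <;> simp
    exact Subring.closure_mono (Set.singleton_subset_iff.2 hmem) (Xgcv_two_mem_closure l n)
  · apply Subring.closure_mono
    rintro _ (rfl | rfl)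
    · exact ⟨1, 1, Or.inl rfl, rfl⟩
    · exact ⟨2, 1, Or.inr rfl, rfl⟩

theorem Xgcv_two_one_mul_Xgcv_two_one (l : ℤ) : Xgcv 2 l 1 * Xgcv 2 (l + 1) 1 = 4 := by
  have hl : xv 2 l ≠ 0 := xv_ne_zero l
  have hl' : xv 2 (l + 1) ≠ 0 := xv_ne_zero (l + 1)
  rw [Xgcv_two_one, Xgcv_two_one, xv_congr (i := l + 1 + 1) (j := l) (by grind [Int.ModEq])]
  field_simp
  norm_num

theorem linearIndependent_zpowPair_Xgcv_two (l : ℤ) :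
    LinearIndependent ℤ (zpowPair (Xgcv 2 l 1) (Xgcv 2 (l + 1) 1)) := by
  have hne : ¬ l + 1 ≡ l [ZMOD (2 : ℕ)] := by grind [Int.ModEq]
  rw [Xgcv_two_one, Xgcv_two_one, xv_congr (i := l + 1 + 1) (j := l) (by grind [Int.ModEq]),
    ← Int.cast_two]
  exact linearIndependent_zpowPair_xv hne two_ne_zero

/-- for `r = 2`, the family `{1} ∪ {(2x_2/x_1)^m : m ≥ 1} ∪ {(2x_1/x_2)^n : n ≥ 1}`
(indexed by `k : ℤ`, with `k > 0` giving `(2x_2/x_1)^k`, `k < 0` giving `(2x_1/x_2)^{-k}`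
and `k = 0` giving `1`) is a `ℤ`-basis of the subring of `ℚ(x_1, x_2)` generated by all
generalized cluster variables: it is `ℤ`-linearly independent and its `ℤ`-span is that
subring.  Here `2x_2/x_1 = X(1,1)` and `2x_1/x_2 = X(2,1)`. -/
theorem stmt10 :
    Xgcv 2 1 1 = 2 * xv 2 2 / xv 2 1 ∧ Xgcv 2 2 1 = 2 * xv 2 1 / xv 2 2 ∧
    LinearIndependent ℤ
      (fun k : ℤ => (2 * xv 2 2 / xv 2 1) ^ k.toNat * (2 * xv 2 1 / xv 2 2) ^ (-k).toNat) ∧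
    (Submodule.span ℤ
        (Set.range fun k : ℤ =>
          (2 * xv 2 2 / xv 2 1) ^ k.toNat * (2 * xv 2 1 / xv 2 2) ^ (-k).toNat) :
        Set (CyclicField 2)) =
      (Algebra.adjoin ℤ
          {x : CyclicField 2 | ∃ (l : ℤ) (n : ℕ), (l = 1 ∨ l = 2) ∧ x = Xgcv 2 l n} :
        Set (CyclicField 2)) := by
  have ha : Xgcv 2 1 1 = 2 * xv 2 2 / xv 2 1 := Xgcv_two_one 1
  have hb : Xgcv 2 2 1 = 2 * xv 2 1 / xv 2 2 := by
    rw [Xgcv_two_one, xv_congr (i := 2 + 1) (j := 1) (by decide)]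
  have hab : Xgcv 2 1 1 * Xgcv 2 2 1 = (4 : ℤ) :=
    mod_cast Xgcv_two_one_mul_Xgcv_two_one 1
  have hindep : LinearIndependent ℤ (zpowPair (Xgcv 2 1 1) (Xgcv 2 2 1)) :=
    linearIndependent_zpowPair_Xgcv_two 1
  have hspan := coe_span_int_range_zpowPair hab
  rw [← closure_Xgcv_two, ← coe_adjoin_int] at hspan
  rw [← ha, ← hb]
  exact ⟨rfl, rfl, hindep, hspan⟩
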